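/- Let G=(V,E) be a Bonnet-Myers sharp graph of diameter 2. Then there exist integers a≥1 and b≥0 such that G is isomorphic to G(a,b); equivalently, G can be obtained from the complete graph on |V| vertices by deleting a matching. -/

import Mathlib

open scoped Classical
open Finset

noncomputable section

/-- The degree of a vertex `x` in the graph `G`. -/
def deg {V : Type*} [Fintype V] (G : SimpleGraph V) (x : V) : ℕ :=
  (Finset.univ.filter (fun y => G.Adj x y)).card

/-- The diameter of `G`: the maximum of the combinatorial distance over all pairs of vertices. -/
def diam {V : Type*} [Fintype V] (G : SimpleGraph V) : ℕ :=
  Finset.univ.sup (fun xy : V × V => G.dist xy.1 xy.2)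

/-- The probability measure `μ_x^p` of the lazy simple random walk at `x` with idleness `p`. -/
def mu {V : Type*} [Fintype V] (G : SimpleGraph V) (p : ℝ) (x : V) : V → ℝ :=
  fun z => if z = x then p else if G.Adj x z then (1 - p) / (deg G x : ℝ) else 0

/-- The Wasserstein distance `W₁(μ₁, μ₂)` with respect to the combinatorial distance of `G`:
the infimum of the total transport cost over all transport plans from `μ₁` to `μ₂`. -/
def W1 {V : Type*} [Fintype V] (G : SimpleGraph V) (μ₁ μ₂ : V → ℝ) : ℝ :=
  sInf {c : ℝ | ∃ π : V → V → ℝ,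
    (∀ x y, 0 ≤ π x y ∧ π x y ≤ 1) ∧
    (∀ x, ∑ y, π x y = μ₁ x) ∧
    (∀ y, ∑ x, π x y = μ₂ y) ∧
    c = ∑ x, ∑ y, (G.dist x y : ℝ) * π x y}

/-- The `p`-Ollivier-Ricci curvature `κ_p(x,y) = 1 - W₁(μ_x^p, μ_y^p)`. -/
def kappa {V : Type*} [Fintype V] (G : SimpleGraph V) (p : ℝ) (x y : V) : ℝ :=
  1 - W1 G (mu G p x) (mu G p y)

/-- The Lin-Lu-Yau curvature `κ_LLY(x,y) = lim_{p→1} κ_p(x,y)/(1-p)`. -/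
def kappaLLY {V : Type*} [Fintype V] (G : SimpleGraph V) (x y : V) : ℝ :=
  Filter.limUnder (nhdsWithin 1 (Set.Iio 1)) (fun p => kappa G p x y / (1 - p))

/-- `G` is Bonnet-Myers sharp if the infimum of `κ_LLY` over the edges equals `2/diam(G)`. -/
def BMSharp {V : Type*} [Fintype V] (G : SimpleGraph V) : Prop :=
  sInf {r : ℝ | ∃ x y, G.Adj x y ∧ r = kappaLLY G x y} = 2 / (diam G : ℝ)

/-- `G` is obtained from the complete graph on its vertex set by deleting a matching
(a set of pairwise disjoint edges, encoded as a symmetric irreflexive relation in which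
every vertex has at most one partner). -/
def IsMatchingDeletionOfComplete {V : Type*} (G : SimpleGraph V) : Prop :=
  ∃ M : V → V → Prop, Symmetric M ∧ (∀ x, ¬ M x x) ∧
    (∀ x y z, M x y → M x z → y = z) ∧
    (∀ x y, G.Adj x y ↔ x ≠ y ∧ ¬ M x y)

/-- The graph `G(a,b)` on `2a+b` vertices `u_1, …, u_{2a}, v_1, …, v_b` (encoded as
`Fin (2a+b)`, with `u_i` the index `i-1` and `v_j` the index `2a+j-1`), in which two distinct
vertices are adjacent unless they form a pair `{u_{2i-1}, u_{2i}}`, i.e. `G(a,b)` is the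
complete graph `K_{2a+b}` with a matching of size `a` deleted. -/
def Gab (a b : ℕ) : SimpleGraph (Fin (2*a+b)) where
  Adj x y := x ≠ y ∧ ¬((x : ℕ) < 2*a ∧ (y : ℕ) < 2*a ∧ (x : ℕ)/2 = (y : ℕ)/2)
  symm := by
    constructor
    intro x y h
    exact ⟨h.1.symm, fun hc => h.2 ⟨hc.2.1, hc.1, hc.2.2.symm⟩⟩
  loopless := by constructor; intro x h; exact h.1 rfl

/-- The antitree `AT(a_1, …, a_N)` on the disjoint union of sets `V_1, …, V_N` with
`|V_k| = a_k` (0-indexed here: `V_k` is `Fin (a k)` for `k : Fin N`): two distinct vertices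
are adjacent iff they lie in the same set or in consecutive sets. -/
def antitree (N : ℕ) (a : Fin N → ℕ) : SimpleGraph (Σ k : Fin N, Fin (a k)) where
  Adj x y := x ≠ y ∧
    ((x.1 : ℕ) = (y.1 : ℕ) ∨ (x.1 : ℕ) + 1 = (y.1 : ℕ) ∨ (y.1 : ℕ) + 1 = (x.1 : ℕ))
  symm := by
    constructor
    intro x y h
    refine ⟨h.1.symm, ?_⟩
    rcases h.2 with h2 | h2 | h2
    · exact Or.inl h2.symm
    · exact Or.inr (Or.inr h2)
    · exact Or.inr (Or.inl h2)
  loopless := by constructor; intro x h; exact h.1 rfl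

/-!
Integrating a 1-Lipschitz function `f` with `f x - f y = 1` against the random-walk measures
bounds `κ_LLY(x,y)` by `1 + mean f y - mean f x`, where `mean f` averages `f` over the neighbours.
Assume `κ_LLY ≥ 1` on all edges. For `f = d(·,z)` this says that the mean distance to `z` does not
increase when one steps away from `z`; it is at most `1` at `z` itself, hence at most `1`
everywhere. So, of the neighbours of `x`, at most as many lie at distance `≥ 2` from `z` as are
equal to `z`. If `x` and `z` are distinct and nonadjacent, none do: every neighbour of `x` is a
neighbour of `z`, and by symmetry conversely. Two distinct vertices `x, x'` adjacent to `z` in the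
complement of `G` would thus both be adjacent in `G` to each neighbour `y` of `z`, and `y` would
have two neighbours at distance `≥ 2` from `z`. Hence the complement of `G` is a matching.
-/

section Transport

variable {V : Type*} [Fintype V]

/-- A transport plan from `μ` to `ν`, as in the definition of `W1`. -/
structure IsCoupling (μ ν : V → ℝ) (π : V → V → ℝ) : Prop where
  nonneg : ∀ x y, 0 ≤ π x y
  le_one : ∀ x y, π x y ≤ 1
  sum_right : ∀ x, ∑ y, π x y = μ x
  sum_left : ∀ y, ∑ x, π x y = ν y

lemma IsCoupling.prod {μ ν : V → ℝ} (hμ : μ ∈ stdSimplex ℝ V) (hν : ν ∈ stdSimplex ℝ V) :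
    IsCoupling μ ν (fun x y => μ x * ν y) where
  nonneg x y := mul_nonneg (hμ.1 x) (hν.1 y)
  le_one x y := mul_le_one₀ (mem_Icc_of_mem_stdSimplex hμ x).2 (hν.1 y)
    (mem_Icc_of_mem_stdSimplex hν y).2
  sum_right x := by rw [← mul_sum, hν.2, mul_one]
  sum_left y := by rw [← sum_mul, hμ.2, one_mul]

lemma IsCoupling.convexCombination {μ₁ ν₁ μ₂ ν₂ : V → ℝ} {π₁ π₂ : V → V → ℝ}
    (h₁ : IsCoupling μ₁ ν₁ π₁) (h₂ : IsCoupling μ₂ ν₂ π₂) {s t : ℝ} (hs : 0 ≤ s) (ht : 0 ≤ t)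
    (hst : s + t = 1) :
    IsCoupling (s • μ₁ + t • μ₂) (s • ν₁ + t • ν₂) (s • π₁ + t • π₂) where
  nonneg x y := add_nonneg (mul_nonneg hs (h₁.nonneg x y)) (mul_nonneg ht (h₂.nonneg x y))
  le_one x y := convex_Iic (1 : ℝ) (h₁.le_one x y) (h₂.le_one x y) hs ht hst
  sum_right x := by simp [sum_add_distrib, ← mul_sum, h₁.sum_right, h₂.sum_right]
  sum_left y := by simp [sum_add_distrib, ← mul_sum, h₁.sum_left, h₂.sum_left]

lemma IsCoupling.sum_sub_mul {μ ν : V → ℝ} {π : V → V → ℝ} (h : IsCoupling μ ν π) (f : V → ℝ) :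
    ∑ x, ∑ y, (f x - f y) * π x y = ∑ x, f x * μ x - ∑ y, f y * ν y := by
  simp only [sub_mul, sum_sub_distrib, ← h.sum_right, ← h.sum_left, mul_sum]
  rw [sum_comm (f := fun y x => f y * π x y)]

variable (G : SimpleGraph V)

/-- The cost of the transport plan `π` for the graph distance. -/
def transportCost (π : V → V → ℝ) : ℝ := ∑ x, ∑ y, (G.dist x y : ℝ) * π x y

lemma transportCost_nonneg {π : V → V → ℝ} (hπ : ∀ x y, 0 ≤ π x y) : 0 ≤ transportCost G π :=
  sum_nonneg fun x _ => sum_nonneg fun y _ => mul_nonneg (Nat.cast_nonneg _) (hπ x y)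

lemma transportCost_add_smul (s t : ℝ) (π₁ π₂ : V → V → ℝ) :
    transportCost G (s • π₁ + t • π₂) = s * transportCost G π₁ + t * transportCost G π₂ := by
  simp [transportCost, mul_add, sum_add_distrib, mul_sum, mul_left_comm]

lemma W1_eq_sInf_image (μ ν : V → ℝ) :
    W1 G μ ν = sInf (transportCost G '' {π | IsCoupling μ ν π}) := by
  refine congrArg sInf (Set.ext fun c => ⟨?_, ?_⟩)
  · rintro ⟨π, hπ, hμ, hν, rfl⟩
    exact ⟨π, ⟨fun x y => (hπ x y).1, fun x y => (hπ x y).2, hμ, hν⟩, rfl⟩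
  · rintro ⟨π, hπ, rfl⟩
    exact ⟨π, fun x y => ⟨hπ.nonneg x y, hπ.le_one x y⟩, hπ.sum_right, hπ.sum_left, rfl⟩

variable {μ ν μ₁ μ₂ ν₁ ν₂ : V → ℝ}

lemma W1_le_transportCost {π : V → V → ℝ} (hπ : IsCoupling μ ν π) :
    W1 G μ ν ≤ transportCost G π := by
  rw [W1_eq_sInf_image]
  refine csInf_le ⟨0, ?_⟩ (Set.mem_image_of_mem _ hπ)
  rintro _ ⟨ρ, hρ, rfl⟩
  exact transportCost_nonneg G hρ.nonneg

lemma exists_isCoupling_transportCost_lt (hμ : μ ∈ stdSimplex ℝ V) (hν : ν ∈ stdSimplex ℝ V)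
    {c : ℝ} (hc : W1 G μ ν < c) : ∃ π, IsCoupling μ ν π ∧ transportCost G π < c := by
  rw [W1_eq_sInf_image] at hc
  obtain ⟨_, ⟨π, hπ, rfl⟩, hlt⟩ :=
    exists_lt_of_csInf_lt (Set.Nonempty.image _ ⟨_, IsCoupling.prod hμ hν⟩) hc
  exact ⟨π, hπ, hlt⟩

/-- The easy half of Kantorovich duality. -/
lemma sum_mul_sub_sum_mul_le_W1 (hμ : μ ∈ stdSimplex ℝ V) (hν : ν ∈ stdSimplex ℝ V)
    {f : V → ℝ} (hf : ∀ x y, f x - f y ≤ G.dist x y) :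
    ∑ x, f x * μ x - ∑ y, f y * ν y ≤ W1 G μ ν := by
  refine le_of_forall_gt fun c hc => ?_
  obtain ⟨π, hπ, hlt⟩ := exists_isCoupling_transportCost_lt G hμ hν hc
  rw [← hπ.sum_sub_mul f]
  exact (sum_le_sum fun x _ => sum_le_sum fun y _ =>
    mul_le_mul_of_nonneg_right (hf x y) (hπ.nonneg x y)).trans_lt hlt

lemma W1_convexCombination_le (hμ₁ : μ₁ ∈ stdSimplex ℝ V) (hν₁ : ν₁ ∈ stdSimplex ℝ V)
    (hμ₂ : μ₂ ∈ stdSimplex ℝ V) (hν₂ : ν₂ ∈ stdSimplex ℝ V) {s t : ℝ} (hs : 0 ≤ s) (ht : 0 ≤ t)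
    (hst : s + t = 1) :
    W1 G (s • μ₁ + t • μ₂) (s • ν₁ + t • ν₂) ≤ s * W1 G μ₁ ν₁ + t * W1 G μ₂ ν₂ := by
  refine le_of_forall_pos_le_add fun ε hε => ?_
  obtain ⟨π₁, hπ₁, hlt₁⟩ :=
    exists_isCoupling_transportCost_lt G hμ₁ hν₁ (lt_add_of_pos_right _ hε)
  obtain ⟨π₂, hπ₂, hlt₂⟩ :=
    exists_isCoupling_transportCost_lt G hμ₂ hν₂ (lt_add_of_pos_right _ hε)
  calc W1 G (s • μ₁ + t • μ₂) (s • ν₁ + t • ν₂)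
      ≤ s * transportCost G π₁ + t * transportCost G π₂ := by
        rw [← transportCost_add_smul]
        exact W1_le_transportCost G (hπ₁.convexCombination hπ₂ hs ht hst)
    _ ≤ s * (W1 G μ₁ ν₁ + ε) + t * (W1 G μ₂ ν₂ + ε) := by gcongr
    _ = s * W1 G μ₁ ν₁ + t * W1 G μ₂ ν₂ + ε := by linear_combination ε * hst

lemma W1_single_single_le_dist (x y : V) :
    W1 G (Pi.single x 1) (Pi.single y 1) ≤ G.dist x y := by
  refine (W1_le_transportCost G
    (IsCoupling.prod (single_mem_stdSimplex ℝ x) (single_mem_stdSimplex ℝ y))).trans_eq ?_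
  simp [transportCost, Pi.single_apply]

end Transport

section RandomWalk

variable {V : Type*} [Fintype V] (G : SimpleGraph V)

lemma deg_eq_degree (x : V) : deg G x = G.degree x := by
  simp only [deg, SimpleGraph.degree, G.neighborFinset_eq_filter]

lemma deg_pos_of_adj {x y : V} (hxy : G.Adj x y) : 0 < deg G x :=
  card_pos.mpr ⟨y, by simpa using hxy⟩

/-- The expectation of `f` after one step of the simple random walk on `G` from `x`
(`0` if `x` is isolated). -/
def neighborMean (f : V → ℝ) (x : V) : ℝ := (∑ w ∈ G.neighborFinset x, f w) / deg G x

lemma sum_mul_mu (f : V → ℝ) (p : ℝ) (x : V) :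
    ∑ z, f z * mu G p x z = p * f x + (1 - p) * neighborMean G f x := by
  have split_mu (z : V) : f z * mu G p x z =
      (if z = x then p * f z else 0) + if G.Adj x z then (1 - p) / deg G x * f z else 0 := by
    unfold mu
    split_ifs with hzx hadj
    · exact absurd hzx hadj.ne'
    all_goals ring
  simp only [split_mu, sum_add_distrib, sum_ite_eq', mem_univ, if_true, ← sum_filter, ← mul_sum,
    neighborMean, G.neighborFinset_eq_filter]
  ring

lemma mu_mem_stdSimplex {p : ℝ} (hp : p ∈ Set.Icc (0 : ℝ) 1) {x : V} (hx : 0 < deg G x) :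
    mu G p x ∈ stdSimplex ℝ V := by
  refine ⟨fun z => ?_, ?_⟩
  · unfold mu
    split_ifs
    exacts [hp.1, div_nonneg (sub_nonneg.mpr hp.2) (Nat.cast_nonneg _), le_rfl]
  · have hmean : neighborMean G 1 x = 1 := by
      have hdeg : (G.degree x : ℝ) ≠ 0 := by
        rw [← deg_eq_degree]
        exact_mod_cast hx.ne'
      simpa [neighborMean, deg_eq_degree] using div_self hdeg
    simpa [hmean] using sum_mul_mu G 1 p x

lemma mu_one (x : V) : mu G 1 x = Pi.single x 1 := by
  ext z
  simp [mu, Pi.single_apply]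

lemma mu_convexCombination {s t : ℝ} (hst : s + t = 1) (p q : ℝ) (x : V) :
    mu G (s * p + t * q) x = s • mu G p x + t • mu G q x := by
  ext z
  obtain rfl : t = 1 - s := by linarith
  simp only [mu, Pi.add_apply, Pi.smul_apply, smul_eq_mul]
  split_ifs <;> ring

end RandomWalk

section Curvature

variable {V : Type*} [Fintype V] {G : SimpleGraph V} {x y : V}

lemma concaveOn_kappa (hx : 0 < deg G x) (hy : 0 < deg G y) :
    ConcaveOn ℝ (Set.Icc 0 1) (fun p => kappa G p x y) := by
  refine ⟨convex_Icc 0 1, fun p hp q hq s t hs ht hst => ?_⟩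
  have hW := W1_convexCombination_le G (mu_mem_stdSimplex G hp hx) (mu_mem_stdSimplex G hp hy)
    (mu_mem_stdSimplex G hq hx) (mu_mem_stdSimplex G hq hy) hs ht hst
  simp only [kappa, smul_eq_mul, mu_convexCombination G hst]
  linear_combination hW + hst

lemma kappa_one_nonneg_of_adj (hxy : G.Adj x y) : 0 ≤ kappa G 1 x y := by
  have hW := W1_single_single_le_dist G x y
  rw [SimpleGraph.dist_eq_one_iff_adj.mpr hxy, Nat.cast_one] at hW
  simpa only [kappa, mu_one, sub_nonneg] using hW

lemma monotoneOn_kappa_div (hxy : G.Adj x y) :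
    MonotoneOn (fun p => kappa G p x y / (1 - p)) (Set.Ico 0 1) := by
  intro p hp q hq hpq
  have hp' : 0 < 1 - p := sub_pos.mpr hp.2
  have hq' : 0 < 1 - q := sub_pos.mpr hq.2
  have hconc := (concaveOn_kappa (deg_pos_of_adj G hxy) (deg_pos_of_adj G hxy.symm)).2
    ⟨hp.1, hp.2.le⟩ (Set.right_mem_Icc.mpr zero_le_one)
    (div_nonneg hq'.le hp'.le) (div_nonneg (sub_nonneg.mpr hpq) hp'.le) (by field_simp; ring)
  have hq_eq : (1 - q) / (1 - p) * p + (q - p) / (1 - p) * 1 = q := by field_simp; ring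
  simp only [smul_eq_mul, hq_eq] at hconc
  have hone : 0 ≤ (q - p) / (1 - p) * kappa G 1 x y :=
    mul_nonneg (div_nonneg (sub_nonneg.mpr hpq) hp'.le) (kappa_one_nonneg_of_adj hxy)
  change kappa G p x y / (1 - p) ≤ kappa G q x y / (1 - q)
  rw [le_div_iff₀ hq', div_mul_eq_mul_div, mul_comm, ← div_mul_eq_mul_div]
  linarith

lemma kappaLLY_le_of_forall_kappa_div_le (hxy : G.Adj x y) {C : ℝ}
    (hC : ∀ p ∈ Set.Ioo (0 : ℝ) 1, kappa G p x y / (1 - p) ≤ C) : kappaLLY G x y ≤ C := by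
  have hne : (Set.Ioo (0 : ℝ) 1).Nonempty := Set.nonempty_Ioo.mpr one_pos
  have hub : C ∈ upperBounds ((fun p => kappa G p x y / (1 - p)) '' Set.Ioo (0 : ℝ) 1) :=
    Set.forall_mem_image.mpr hC
  have htendsto := ((monotoneOn_kappa_div hxy).mono
    Set.Ioo_subset_Ico_self).tendsto_nhdsWithin_Ioo_left hne ⟨C, hub⟩
  exact htendsto.limUnder_eq.trans_le (csSup_le (hne.image _) hub)

lemma kappa_div_le (hxy : G.Adj x y) {f : V → ℝ} (hf : ∀ a b, f a - f b ≤ G.dist a b)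
    (hfxy : f x - f y = 1) {p : ℝ} (hp : p ∈ Set.Ico (0 : ℝ) 1) :
    kappa G p x y / (1 - p) ≤ 1 + neighborMean G f y - neighborMean G f x := by
  have hW := sum_mul_sub_sum_mul_le_W1 G
    (mu_mem_stdSimplex G ⟨hp.1, hp.2.le⟩ (deg_pos_of_adj G hxy))
    (mu_mem_stdSimplex G ⟨hp.1, hp.2.le⟩ (deg_pos_of_adj G hxy.symm)) hf
  rw [sum_mul_mu, sum_mul_mu] at hW
  rw [div_le_iff₀ (sub_pos.mpr hp.2), kappa]
  linear_combination hW - p * hfxy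

lemma kappaLLY_le (hxy : G.Adj x y) {f : V → ℝ} (hf : ∀ a b, f a - f b ≤ G.dist a b)
    (hfxy : f x - f y = 1) : kappaLLY G x y ≤ 1 + neighborMean G f y - neighborMean G f x :=
  kappaLLY_le_of_forall_kappa_div_le hxy fun _ hp =>
    kappa_div_le hxy hf hfxy (Set.Ioo_subset_Ico_self hp)

lemma BMSharp.two_div_diam_le_kappaLLY (hBM : BMSharp G) (hxy : G.Adj x y) :
    2 / (diam G : ℝ) ≤ kappaLLY G x y := by
  rw [← hBM]
  have hfin : {r : ℝ | ∃ a b, G.Adj a b ∧ r = kappaLLY G a b}.Finite :=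
    (Set.finite_range fun e : V × V => kappaLLY G e.1 e.2).subset <| by
      rintro _ ⟨a, b, -, rfl⟩
      exact ⟨(a, b), rfl⟩
  exact csInf_le hfin.bddBelow ⟨x, y, hxy, rfl⟩

lemma ne_top_of_one_lt_diam (h : 1 < diam G) : G ≠ ⊤ := by
  rintro rfl
  refine h.not_ge (Finset.sup_le fun e _ => ?_)
  rw [SimpleGraph.dist_top]
  split_ifs <;> decide

end Curvature

section CurvatureAtLeastOne

variable {V : Type*} [Fintype V] {G : SimpleGraph V}

lemma neighborMean_dist_le_of_one_le_kappaLLY (hconn : G.Connected) {x y z : V} (hxy : G.Adj x y)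
    (hκ : 1 ≤ kappaLLY G x y) (hd : G.dist x z = G.dist y z + 1) :
    neighborMean G (fun w => (G.dist w z : ℝ)) x ≤
      neighborMean G (fun w => (G.dist w z : ℝ)) y := by
  have hle := kappaLLY_le (f := fun w => (G.dist w z : ℝ)) hxy
    (fun a b => sub_le_iff_le_add.mpr (by exact_mod_cast hconn.dist_triangle)) (by simp [hd])
  linarith

lemma exists_adj_dist_eq_of_dist_eq_succ {V : Type*} {G : SimpleGraph V} {x z : V} {n : ℕ}
    (h : G.dist x z = n + 1) : ∃ y, G.Adj x y ∧ G.dist y z = n := by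
  obtain ⟨p, hp⟩ := SimpleGraph.exists_walk_of_dist_ne_zero (h.trans_ne n.succ_ne_zero)
  cases p with
  | nil => simp at h
  | @cons _ y _ hxy q =>
    refine ⟨y, hxy, ?_⟩
    have hq : q.length = n := by simpa [h] using hp
    have hle := SimpleGraph.dist_le q
    have htri := hxy.reachable.dist_triangle_left z
    rw [SimpleGraph.dist_eq_one_iff_adj.mpr hxy] at htri
    omega

variable (hconn : G.Connected) (hκ : ∀ x y, G.Adj x y → 1 ≤ kappaLLY G x y)
include hconn hκ

lemma neighborMean_dist_le_one (x z : V) : neighborMean G (fun w => (G.dist w z : ℝ)) x ≤ 1 := by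
  induction hn : G.dist x z generalizing x with
  | zero =>
    obtain rfl := hconn.dist_eq_zero_iff.mp hn
    have hsum : ∑ w ∈ G.neighborFinset x, (G.dist w x : ℝ) = deg G x := by
      rw [deg_eq_degree, SimpleGraph.degree, ← nsmul_one]
      refine sum_eq_card_nsmul fun w hw => ?_
      rw [SimpleGraph.dist_eq_one_iff_adj.mpr ((G.mem_neighborFinset x w).mp hw).symm, Nat.cast_one]
    rw [neighborMean, hsum]
    exact div_self_le_one _
  | succ n ih =>
    obtain ⟨y, hxy, hy⟩ := exists_adj_dist_eq_of_dist_eq_succ hn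
    exact (neighborMean_dist_le_of_one_le_kappaLLY hconn hxy (hκ x y hxy) (by rw [hn, hy])).trans
      (ih y hy)

lemma sum_neighborFinset_dist_le_card (x z : V) :
    ∑ w ∈ G.neighborFinset x, G.dist w z ≤ #(G.neighborFinset x) := by
  have hmean := neighborMean_dist_le_one hconn hκ x z
  rw [neighborMean, deg_eq_degree, SimpleGraph.degree] at hmean
  rcases (G.neighborFinset x).eq_empty_or_nonempty with hN | hN
  · simp [hN]
  · rw [div_le_one (by exact_mod_cast hN.card_pos)] at hmean
    exact_mod_cast hmean

lemma card_filter_compl_adj_le_card_filter_eq (x z : V) :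
    #{w ∈ G.neighborFinset x | Gᶜ.Adj w z} ≤ #{w ∈ G.neighborFinset x | w = z} := by
  have hpoint (w : V) :
      1 + (if Gᶜ.Adj w z then 1 else 0) ≤ G.dist w z + if w = z then 1 else 0 := by
    by_cases hwz : w = z
    · simp [hwz]
    · have hpos := hconn.pos_dist_of_ne hwz
      split_ifs with hadj
      · exact hconn.one_lt_dist_of_ne_of_not_adj hwz ((G.compl_adj w z).mp hadj).2
      · exact hpos
  have hsum := sum_le_sum fun w (_ : w ∈ G.neighborFinset x) => hpoint w
  simp only [sum_add_distrib, ← card_filter, sum_const, smul_eq_mul, mul_one] at hsum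
  have := sum_neighborFinset_dist_le_card hconn hκ x z
  omega

lemma adj_of_compl_adj_of_adj {x z w : V} (hxz : Gᶜ.Adj x z) (hxw : G.Adj x w) : G.Adj z w := by
  rw [SimpleGraph.compl_adj] at hxz
  have hwz : w ≠ z := by
    rintro rfl
    exact hxz.2 hxw
  have hnone : #{w ∈ G.neighborFinset x | w = z} = 0 := by
    simpa [filter_eq_empty_iff] using fun v hv (hvz : v = z) => hxz.2 (hvz ▸ hv)
  have hfar := card_filter_compl_adj_le_card_filter_eq hconn hκ x z
  rw [hnone, Nat.le_zero, card_eq_zero, filter_eq_empty_iff] at hfar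
  by_contra hzw
  exact hfar ((G.mem_neighborFinset x w).mpr hxw)
    ((G.compl_adj w z).mpr ⟨hwz, fun h => hzw h.symm⟩)

lemma eq_of_adj_of_compl_adj {y z x x' : V} (hyx : G.Adj y x) (hyx' : G.Adj y x')
    (hx : Gᶜ.Adj x z) (hx' : Gᶜ.Adj x' z) : x = x' := by
  have hle : #{w ∈ G.neighborFinset y | Gᶜ.Adj w z} ≤ 1 :=
    (card_filter_compl_adj_le_card_filter_eq hconn hκ y z).trans <|
      card_le_one.mpr fun a ha b hb => (mem_filter.mp ha).2.trans (mem_filter.mp hb).2.symm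
  exact card_le_one.mp hle
    x (mem_filter.mpr ⟨(G.mem_neighborFinset y x).mpr hyx, hx⟩)
    x' (mem_filter.mpr ⟨(G.mem_neighborFinset y x').mpr hyx', hx'⟩)

end CurvatureAtLeastOne

section Matching

/-- The edges of `H` form a matching: they are pairwise disjoint. -/
def IsMatchingGraph {V : Type*} (H : SimpleGraph V) : Prop :=
  ∀ ⦃x y z⦄, H.Adj x y → H.Adj x z → y = z

theorem isMatchingGraph_compl_of_one_le_kappaLLY {V : Type*} [Fintype V] {G : SimpleGraph V}
    (hconn : G.Connected) (hκ : ∀ x y, G.Adj x y → 1 ≤ kappaLLY G x y) : IsMatchingGraph Gᶜ := by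
  intro z x x' hx hx'
  by_contra hne
  have : Nontrivial V := ⟨x, x', hne⟩
  obtain ⟨y, hzy⟩ := hconn.preconnected.exists_adj_of_nontrivial z
  exact hne (eq_of_adj_of_compl_adj hconn hκ (adj_of_compl_adj_of_adj hconn hκ hx hzy).symm
    (adj_of_compl_adj_of_adj hconn hκ hx' hzy).symm hx.symm hx'.symm)

variable {V W : Type*}

lemma IsMatchingGraph.isMatchingDeletionOfComplete {G : SimpleGraph V} (h : IsMatchingGraph Gᶜ) :
    IsMatchingDeletionOfComplete G := by
  refine ⟨Gᶜ.Adj, fun _ _ => .symm, fun _ => Gᶜ.irrefl, fun _ _ _ hy hz => h hy hz, fun x y => ?_⟩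
  rw [← SimpleGraph.compl_adj, compl_compl]

lemma IsMatchingGraph.exists_involutive_perm {H : SimpleGraph V} (h : IsMatchingGraph H) :
    ∃ σ : Equiv.Perm V, Function.Involutive σ ∧ ∀ x y, H.Adj x y ↔ x ≠ y ∧ σ x = y := by
  have hpartner (x : V) : ∃ y, H.Adj x y ∨ y = x ∧ ∀ w, ¬ H.Adj x w := by
    by_cases hx : ∃ y, H.Adj x y
    · exact hx.imp fun _ => Or.inl
    · exact ⟨x, .inr ⟨rfl, not_exists.mp hx⟩⟩
  choose f hf using hpartner
  have hf_adj {x y : V} (hxy : H.Adj x y) : f x = y :=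
    (hf x).elim (fun hx => h hx hxy) fun hx => absurd hxy (hx.2 y)
  have hinv : Function.Involutive f := fun x =>
    (hf x).elim (fun hx => hf_adj hx.symm) fun hx => by rw [hx.1, hx.1]
  refine ⟨hinv.toPerm, hinv, fun x y => ⟨fun hxy => ⟨hxy.ne, hf_adj hxy⟩, ?_⟩⟩
  rintro ⟨hne, rfl⟩
  exact (hf x).resolve_right fun hx => hne hx.1.symm

lemma isConj_of_involutive [Fintype V] [DecidableEq V] {σ τ : Equiv.Perm V}
    (hσ : Function.Involutive σ) (hτ : Function.Involutive τ) (hcard : #σ.support = #τ.support) :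
    IsConj σ τ := by
  have hcycle {ρ : Equiv.Perm V} (hρ : Function.Involutive ρ) :
      ρ.cycleType = Multiset.replicate (#ρ.support / 2) 2 := by
    have hrep := Equiv.Perm.cycleType_of_pow_prime_eq_one (p := 2)
      (Equiv.ext fun x => by simpa [sq] using hρ x : ρ ^ 2 = 1)
    rw [← ρ.sum_cycleType, hrep]
    simp
  rw [Equiv.Perm.isConj_iff_cycleType_eq, hcycle hσ, hcycle hτ, hcard]

lemma coe_support_eq_support_of_adj_iff [Fintype V] [DecidableEq V] {H : SimpleGraph V}
    {σ : Equiv.Perm V} (hσ : ∀ x y, H.Adj x y ↔ x ≠ y ∧ σ x = y) :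
    (σ.support : Set V) = H.support := by
  ext x
  simp [SimpleGraph.mem_support, hσ, eq_comm]

lemma IsMatchingGraph.even_ncard_support [Finite V] {H : SimpleGraph V} (h : IsMatchingGraph H) :
    Even H.support.ncard := by
  have := Fintype.ofFinite V
  obtain ⟨σ, hσ, hadj⟩ := h.exists_involutive_perm
  rw [← coe_support_eq_support_of_adj_iff hadj, Set.ncard_coe_finset, even_iff_two_dvd]
  exact Equiv.Perm.two_dvd_card_support (Equiv.ext fun x => by simpa [sq] using hσ x)

theorem IsMatchingGraph.nonempty_iso [Finite V] [Finite W] {H : SimpleGraph V} {K : SimpleGraph W}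
    (hH : IsMatchingGraph H) (hK : IsMatchingGraph K) (hcard : Nat.card V = Nat.card W)
    (hsupport : H.support.ncard = K.support.ncard) : Nonempty (H ≃g K) := by
  have := Fintype.ofFinite V
  have := Fintype.ofFinite W
  obtain ⟨σ, hσ, hσ_adj⟩ := hH.exists_involutive_perm
  obtain ⟨τ, hτ, hτ_adj⟩ := hK.exists_involutive_perm
  obtain ⟨e⟩ := Finite.card_eq.mp hcard
  let τ' : Equiv.Perm V := e.symm.permCongr τ
  have hτ' : Function.Involutive τ' := fun x => by simp [τ', hτ (e x)]
  have hsupport' : #σ.support = #τ'.support := by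
    rw [← coe_support_eq_support_of_adj_iff hσ_adj, ← coe_support_eq_support_of_adj_iff hτ_adj,
      Set.ncard_coe_finset, Set.ncard_coe_finset] at hsupport
    exact hsupport.trans
      (card_equiv e fun x => by simp [τ', Equiv.symm_apply_eq]).symm
  obtain ⟨c, hc⟩ := isConj_iff.mp (isConj_of_involutive hσ hτ' hsupport')
  have hcomm (x : V) : e (c (σ x)) = τ (e (c x)) := by
    have := congrArg (fun ρ : Equiv.Perm V => e (ρ (c x))) hc
    simpa [τ'] using this
  refine ⟨⟨c.trans e, fun {x y} => ?_⟩⟩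
  simp [hσ_adj, hτ_adj, ← hcomm]

lemma compl_Gab_adj {a b : ℕ} {x y : Fin (2 * a + b)} :
    (Gab a b)ᶜ.Adj x y ↔
      x ≠ y ∧ (x : ℕ) < 2 * a ∧ (y : ℕ) < 2 * a ∧ (x : ℕ) / 2 = (y : ℕ) / 2 := by
  simp only [SimpleGraph.compl_adj, Gab]
  tauto

lemma isMatchingGraph_compl_Gab (a b : ℕ) : IsMatchingGraph (Gab a b)ᶜ := by
  intro x y z hy hz
  simp only [compl_Gab_adj, ne_eq, Fin.ext_iff] at hy hz ⊢
  omega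

lemma ncard_support_compl_Gab (a b : ℕ) : (Gab a b)ᶜ.support.ncard = 2 * a := by
  have hsupport : (Gab a b)ᶜ.support = Set.range (Fin.castAdd b : Fin (2 * a) → _) := by
    ext x
    simp only [SimpleGraph.mem_support, compl_Gab_adj, Set.mem_range]
    constructor
    · rintro ⟨y, -, hx, -⟩
      exact ⟨⟨x, hx⟩, rfl⟩
    · rintro ⟨i, rfl⟩
      refine ⟨⟨2 * (i / 2) + (1 - i % 2), by omega⟩, ?_⟩
      simp only [ne_eq, Fin.ext_iff, Fin.val_castAdd]
      omega
  rw [hsupport, Set.ncard_range_of_injective (Fin.castAdd_injective _ _), Nat.card_fin]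

theorem IsMatchingGraph.exists_iso_Gab [Finite V] {G : SimpleGraph V} (h : IsMatchingGraph Gᶜ)
    (hG : G ≠ ⊤) : ∃ a b : ℕ, 1 ≤ a ∧ Nonempty (G ≃g Gab a b) := by
  obtain ⟨a, ha⟩ := h.even_ncard_support
  have ha' : Gᶜ.support.ncard = 2 * a := by omega
  have hpos : 0 < Gᶜ.support.ncard := by
    rwa [Set.ncard_pos, Set.nonempty_iff_ne_empty, ne_eq, SimpleGraph.support_eq_bot_iff,
      compl_eq_bot]
  have hle : 2 * a ≤ Nat.card V := ha' ▸ Set.ncard_le_card _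
  obtain ⟨f⟩ := h.nonempty_iso (isMatchingGraph_compl_Gab a (Nat.card V - 2 * a))
    (by rw [Nat.card_fin]; omega) (by rw [ha', ncard_support_compl_Gab])
  exact ⟨a, Nat.card V - 2 * a, by omega,
    ⟨⟨f.toEquiv, (SimpleGraph.Embedding.complEquiv.symm f.toEmbedding).map_adj_iff⟩⟩⟩

end Matching

theorem stmt8_general {V : Type*} [Fintype V] (G : SimpleGraph V) (hconn : G.Connected)
    (hκ : ∀ x y, G.Adj x y → 1 ≤ kappaLLY G x y) (hG : G ≠ ⊤) :
    (∃ a b : ℕ, 1 ≤ a ∧ Nonempty (G ≃g Gab a b)) ∧ IsMatchingDeletionOfComplete G :=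
  have hmatching := isMatchingGraph_compl_of_one_le_kappaLLY hconn hκ
  ⟨hmatching.exists_iso_Gab hG, hmatching.isMatchingDeletionOfComplete⟩

/-- Every Bonnet-Myers sharp graph of diameter 2 is isomorphic to `G(a,b)` for
some integers `a ≥ 1`, `b ≥ 0`; equivalently, it is obtained from the complete graph on its
vertex set by deleting a matching. -/
theorem stmt8 {V : Type*} [Fintype V] (G : SimpleGraph V) (hconn : G.Connected)
    (hdiam : diam G = 2) (hBM : BMSharp G) :
    (∃ a b : ℕ, 1 ≤ a ∧ Nonempty (G ≃g Gab a b)) ∧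
    IsMatchingDeletionOfComplete G := by
  have hκ (x y : V) (hxy : G.Adj x y) : 1 ≤ kappaLLY G x y := by
    simpa [hdiam] using hBM.two_div_diam_le_kappaLLY hxy
  exact stmt8_general G hconn hκ (ne_top_of_one_lt_diam (by omega))
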